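/- Let g be a semisimple Lie algebra with sl2-triple (e,h,f) and grading g = ⊕ g_j by ad h eigenvalues. For E ∈ g_j with j ≥ 0, define the skew form ω on g_1 by ω(a,b) = (f | [a,b]). Then the centralizer of E in g_1 is coisotropic with respect to ω if and only if the map (ad E) ∘ (ad f)^{-1} ∘ (ad E) restricted to g_{-j-1} is zero, where (ad f)^{-1} is a chosen right inverse of ad f on the relevant graded components. -/

import Mathlib

open Polynomial

namespace Sl2Action

variable {F V : Type*} [Field F] [AddCommGroup V] [Module F V]

/-- A linear operator on a finite-dimensional space which is an eigenvector, with nonzero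
eigenvalue, for the commutator with another operator is nilpotent. -/
lemma isNilpotent_of_commutator_eq_smul [CharZero F] [FiniteDimensional F V]
    {H X : Module.End F V} {c : F} (hc : c ≠ 0)
    (hHX : ∀ v, H (X v) = X (H v) + c • X v) : IsNilpotent X := by
  by_contra hX
  have hpow : ∀ k : ℕ, ∀ v, H ((X ^ k) v) = (X ^ k) (H v) + (k * c) • (X ^ k) v := by
    intro k
    induction k with
    | zero => simp
    | succ k ih =>
      intro v
      rw [pow_succ', Module.End.mul_apply, hHX, ih, map_add, map_smul, Module.End.mul_apply]
      push_cast
      module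
  let D : Module.End F (Module.End F V) := LinearMap.mulLeft F H - LinearMap.mulRight F H
  have heig : ∀ k : ℕ, D.HasEigenvalue (k * c) := fun k ↦ by
    refine Module.End.hasEigenvalue_of_hasEigenvector (x := X ^ k)
      ⟨Module.End.mem_eigenspace_iff.mpr ?_, fun h0 ↦ hX ⟨k, h0⟩⟩
    ext v
    simp [D, hpow]
  refine Set.infinite_of_injective_forall_mem (f := fun k : ℕ ↦ (k * c : F)) ?_ heig
    D.finite_hasEigenvalue
  intro a b hab
  simpa [hc] using hab

variable {H X Y : Module.End F V}

lemma apply_lower_pow (hHY : ∀ v, H (Y v) = Y (H v) - (2 : F) • Y v) (m : ℕ) (v : V) :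
    H ((Y ^ m) v) = (Y ^ m) (H v) - (2 * m : F) • (Y ^ m) v := by
  induction m with
  | zero => simp
  | succ m ih =>
    rw [pow_succ', Module.End.mul_apply, hHY, ih, map_sub, map_smul, Module.End.mul_apply]
    push_cast
    module

lemma raise_lower_pow_succ (hHY : ∀ v, H (Y v) = Y (H v) - (2 : F) • Y v)
    (hXY : ∀ v, X (Y v) = Y (X v) + H v) {v : V} (hv : X v = 0) (m : ℕ) :
    X ((Y ^ (m + 1)) v) = (m + 1 : F) • (Y ^ m) (H v - (m : F) • v) := by
  induction m with
  | zero => simp [hXY, hv]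
  | succ m ih =>
    rw [pow_succ', Module.End.mul_apply, hXY, ih, apply_lower_pow hHY]
    simp only [map_sub, map_smul]
    rw [pow_succ', Module.End.mul_apply, Module.End.mul_apply]
    push_cast
    module

/-- On the kernel of the raising operator, `H` has no nontrivial Jordan block with
eigenvalue a natural number. -/
lemma eq_zero_of_jordan_of_raise_eq_zero [CharZero F] [FiniteDimensional F V]
    (hHY : ∀ v, H (Y v) = Y (H v) - (2 : F) • Y v)
    (hXY : ∀ v, X (Y v) = Y (X v) + H v) {n : ℕ} {w w' : V} (hw : X w = 0)
    (hHw : H w = (n : F) • w + w') (hHw' : H w' = (n : F) • w') (hw' : X w' = 0) : w' = 0 := by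
  obtain ⟨M, hM⟩ : IsNilpotent Y :=
    isNilpotent_of_commutator_eq_smul (c := -2) (by norm_num) fun v ↦ by rw [hHY]; module
  have hX' : ∀ m : ℕ, X ((Y ^ (m + 1)) w') = ((m + 1) * (n - m) : F) • (Y ^ m) w' := by
    intro m
    rw [raise_lower_pow_succ hHY hXY hw', hHw', ← sub_smul, map_smul, smul_smul]
  have hXw : ∀ m : ℕ, X ((Y ^ (m + 1)) w) =
      ((m + 1) * (n - m) : F) • (Y ^ m) w + (m + 1 : F) • (Y ^ m) w' := by
    intro m
    rw [raise_lower_pow_succ hHY hXY hw, hHw]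
    simp only [map_sub, map_add, map_smul]
    module
  have hne : ∀ m : ℕ, m ≠ n → ((m + 1) * (n - m) : F) ≠ 0 := fun m hm ↦
    mul_ne_zero (by exact_mod_cast m.succ_ne_zero)
      (sub_ne_zero.mpr (by exact_mod_cast hm.symm))
  have hbig : ∀ v, (Y ^ (n + 1 + M)) v = 0 := fun v ↦ by
    rw [pow_add, hM, mul_zero, LinearMap.zero_apply]
  have hdesc : ∀ {v : V} {a b : ℕ}, (Y ^ (a + b)) v = 0 →
      (∀ m, a ≤ m → m < a + b → (Y ^ (m + 1)) v = 0 → (Y ^ m) v = 0) → (Y ^ a) v = 0 := by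
    intro v a b
    induction b with
    | zero => exact fun h _ ↦ h
    | succ b ih =>
      exact fun h hs ↦ ih (hs (a + b) (by omega) (by omega) h)
        fun m h1 h2 ↦ hs m h1 (by omega)
  have hYw' : (Y ^ (n + 1)) w' = 0 := hdesc (hbig w') fun m h1 _ h0 ↦ by
    have := hX' m
    rw [h0, map_zero] at this
    exact (smul_eq_zero.mp this.symm).resolve_left (hne m (by omega))
  have hYw : (Y ^ (n + 1)) w = 0 := hdesc (hbig w) fun m h1 _ h0 ↦ by
    have := hXw m
    have hYm : (Y ^ m) w' = 0 := by
      rw [← Nat.sub_add_cancel h1, pow_add, Module.End.mul_apply, hYw', map_zero]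
    rw [h0, map_zero, hYm, smul_zero, add_zero] at this
    exact (smul_eq_zero.mp this.symm).resolve_left (hne m (by omega))
  have hYn : (Y ^ n) w' = 0 := by
    have := hXw n
    rw [hYw, map_zero, sub_self, mul_zero, zero_smul, zero_add] at this
    exact (smul_eq_zero.mp this.symm).resolve_left (by exact_mod_cast n.succ_ne_zero)
  simpa using hdesc (v := w') (a := 0) (b := n) (by simpa using hYn) fun m _ h2 h0 ↦ by
    have := hX' m
    rw [h0, map_zero] at this
    exact (smul_eq_zero.mp this.symm).resolve_left (hne m (by omega))

lemma raise_aeval_lower_raise (hHX : ∀ v, H (X v) = X (H v) + (2 : F) • X v)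
    (hHY : ∀ v, H (Y v) = Y (H v) - (2 : F) • Y v)
    (hXY : ∀ v, X (Y v) = Y (X v) + H v) {c : F} (q : F[X]) :
    ∀ w : V, H (X w) = c • X w →
      X (aeval (Y * X) q w) = aeval (Y * X) (q.comp (Polynomial.X + C c)) (X w) := by
  induction q using Polynomial.induction_on' with
  | add p q hp hq =>
    intro w hw
    simp [hp w hw, hq w hw]
  | monomial k a =>
    induction k with
    | zero => simp [Module.algebraMap_end_apply]
    | succ k ih =>
      intro w hw
      have hT : X ((Y * X) w) = (Y * X) (X w) + c • X w := by
        rw [Module.End.mul_apply, hXY, hw, Module.End.mul_apply]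
      have hHT : H (X ((Y * X) w)) = c • X ((Y * X) w) := by
        rw [hT, map_add, map_smul, hw, Module.End.mul_apply, hHY, hHX, hw]
        simp only [map_add, map_smul]
        module
      rw [← monomial_mul_X, map_mul, aeval_X, Module.End.mul_apply, ih _ hHT, hT, mul_comp,
        X_comp, map_mul, Module.End.mul_apply]
      simp [Module.algebraMap_end_apply]

/-- A vector of natural weight that is killed by a power of the raising operator is killed by a
polynomial in `Y * X` without negative integer roots. -/
lemma exists_aeval_lower_raise_eq_zero [CharZero F]
    (hHX : ∀ v, H (X v) = X (H v) + (2 : F) • X v)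
    (hHY : ∀ v, H (Y v) = Y (H v) - (2 : F) • Y v)
    (hXY : ∀ v, X (Y v) = Y (X v) + H v) (k : ℕ) :
    ∀ (n : ℕ) (a : V), H a = (n : F) • a → (X ^ k) a = 0 →
      ∃ p : F[X], aeval (Y * X) p a = 0 ∧ ∀ m : ℕ, p.eval (-(m + 1 : F)) ≠ 0 := by
  induction k with
  | zero => exact fun n a _ ha ↦ ⟨1, by simpa using ha, by simp⟩
  | succ k ih =>
    intro n a hHa ha
    have hHXa : H (X a) = ((n + 2 : ℕ) : F) • X a := by
      rw [hHX, hHa, map_smul]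
      push_cast
      module
    obtain ⟨p, hp, hroot⟩ := ih (n + 2) (X a) hHXa (by rwa [pow_succ, Module.End.mul_apply] at ha)
    refine ⟨Polynomial.X * p.comp (Polynomial.X - C ((n + 2 : ℕ) : F)), ?_, fun m ↦ ?_⟩
    · rw [map_mul, aeval_X, Module.End.mul_apply, Module.End.mul_apply,
        raise_aeval_lower_raise hHX hHY hXY _ a hHXa, comp_assoc]
      simp [hp]
    · have h1 : (-(m + 1 : F)) ≠ 0 := neg_ne_zero.mpr (by exact_mod_cast m.succ_ne_zero)
      have h2 := hroot (m + n + 2)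
      rw [eval_mul, eval_X, eval_comp, eval_sub, eval_X, eval_C]
      refine mul_ne_zero h1 ?_
      rwa [show (-(m + 1 : F)) - ((n + 2 : ℕ) : F) = -(((m + n + 2 : ℕ) : F) + 1) by
        push_cast; ring]

/-- In a finite-dimensional representation of `sl₂`, the operator `H` has no nontrivial Jordan
block with eigenvalue a natural number. -/
lemma eq_zero_of_jordan [CharZero F] [FiniteDimensional F V]
    (hHX : ∀ v, H (X v) = X (H v) + (2 : F) • X v)
    (hHY : ∀ v, H (Y v) = Y (H v) - (2 : F) • Y v)
    (hXY : ∀ v, X (Y v) = Y (X v) + H v) {n : ℕ} {w w' : V}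
    (hHw : H w = (n : F) • w + w') (hHw' : H w' = (n : F) • w') : w' = 0 := by
  obtain ⟨k, hk⟩ : IsNilpotent X := isNilpotent_of_commutator_eq_smul two_ne_zero hHX
  have hw : (X ^ k) w = 0 := by simp [hk]
  clear hk
  induction k generalizing n w w' with
  | zero =>
    obtain rfl : w = 0 := by simpa using hw
    simpa using hHw.symm
  | succ k ih =>
    have hXw' : X w' = 0 := by
      refine ih (n := n + 2) (w := X w) ?_ ?_ (by rwa [pow_succ, Module.End.mul_apply] at hw)
      · rw [hHX, hHw, map_add, map_smul]
        push_cast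
        module
      · rw [hHX, hHw', map_smul]
        push_cast
        module
    have hHXw : H (X w) = ((n + 2 : ℕ) : F) • X w := by
      rw [hHX, hHw, map_add, map_smul, hXw']
      push_cast
      module
    obtain ⟨p, hp, hroot⟩ := exists_aeval_lower_raise_eq_zero hHX hHY hXY k (n + 2) (X w) hHXw
      (by rwa [pow_succ, Module.End.mul_apply] at hw)
    set q := p.comp (Polynomial.X - C ((n + 2 : ℕ) : F)) with hq
    have hcomm : Commute H (aeval (Y * X) q) := by
      have h1 : Commute H (Y * X) := by
        ext v
        simp [hHX, hHY]
      exact Algebra.commute_of_mem_adjoin_singleton_of_commute (aeval_mem_adjoin_singleton F _) h1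
    have hqw' : aeval (Y * X) q w' = q.eval 0 • w' :=
      Module.End.aeval_apply_of_mem_apply_eq_smul (by simp [hXw'])
    have hq0 : q.eval 0 ≠ 0 := by
      have := hroot (n + 1)
      rw [hq, eval_comp, eval_sub, eval_X, eval_C]
      rwa [show (0 : F) - ((n + 2 : ℕ) : F) = -(((n + 1 : ℕ) : F) + 1) by push_cast; ring]
    refine (smul_eq_zero.mp (eq_zero_of_jordan_of_raise_eq_zero hHY hXY (n := n)
      (w := aeval (Y * X) q w) (w' := q.eval 0 • w') ?_ ?_ ?_ ?_)).resolve_left hq0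
    · rw [raise_aeval_lower_raise hHX hHY hXY _ w hHXw, hq, comp_assoc]
      simp [hp]
    · rw [← Module.End.mul_apply, hcomm.eq, Module.End.mul_apply, hHw, map_add, map_smul, hqw']
    · rw [map_smul, hHw', smul_comm]
    · rw [map_smul, hXw', smul_zero]

end Sl2Action

/-- Let `D` be skew-adjoint for a nondegenerate form `B`. If `D` has no nontrivial Jordan block
with eigenvalue `c`, every functional agrees on the `c`-eigenspace with the pairing with some
vector of the `-c`-eigenspace. -/
lemma LinearMap.BilinForm.exists_mem_eigenspace_neg_of_skewAdjoint {F V : Type*} [Field F]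
    [AddCommGroup V] [Module F V] [FiniteDimensional F V] {B : LinearMap.BilinForm F V}
    (hB : B.Nondegenerate) {D : Module.End F V} (hD : ∀ a b, B (D a) b = -B a (D b)) {c : F}
    (hc : ∀ w w', D w = c • w + w' → D w' = c • w' → w' = 0) (L : Module.Dual F V) :
    ∃ y ∈ D.eigenspace (-c), ∀ w ∈ D.eigenspace c, B y w = L w := by
  let P : D.eigenspace (-c) →ₗ[F] Module.Dual F (D.eigenspace c) :=
    B.domRestrict₁₂ (D.eigenspace (-c)) (D.eigenspace c)
  have hP : Function.Surjective P := by
    rw [← LinearMap.flip_injective_iff₁, injective_iff_map_eq_zero]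
    rintro ⟨w, hw⟩ hPw
    rw [Module.End.mem_eigenspace_iff] at hw
    have horth : ∀ y ∈ D.eigenspace (-c), B y w = 0 := fun y hy ↦
      LinearMap.congr_fun hPw ⟨y, hy⟩
    have hrange : w ∈ LinearMap.range (D - c • (1 : Module.End F V)) := by
      by_contra hnot
      obtain ⟨l, hl, hle⟩ := Submodule.exists_le_ker_of_notMem hnot
      have hrep := LinearMap.BilinForm.apply_toDual_symm_apply (hB := hB) (f := l)
      refine hl ?_
      rw [← hrep]
      refine horth _ (Module.End.mem_eigenspace_iff.mpr ?_)
      refine (B.toDual hB).injective (LinearMap.ext fun u ↦ ?_)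
      have hu : l (D u - c • u) = 0 := hle ⟨u, by simp⟩
      rw [map_sub, map_smul, ← hrep, ← hrep] at hu
      simp only [LinearMap.BilinForm.toDual_def, hD, map_smul, LinearMap.smul_apply, smul_eq_mul]
        at hu ⊢
      linear_combination -hu
    obtain ⟨u, hu⟩ := hrange
    have hDu : D u = c • u + w := by
      rw [← hu]
      simp
    exact Subtype.ext (hc u w hDu hw)
  obtain ⟨y, hy⟩ := hP (L ∘ₗ (D.eigenspace c).subtype)
  exact ⟨y, y.2, fun w hw ↦ LinearMap.congr_fun hy ⟨w, hw⟩⟩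


/-- Let `g` be a semisimple Lie algebra with an sl₂-triple `(e,h,f)`
and grading `g = ⊕ g_j` by `ad h` eigenvalues.  For `E ∈ g_j` with `j ≥ 0`, define the
skew form `ω` on `g_1` by `ω(a,b) = (f | [a,b])`.  Then the centralizer of `E` in `g_1`
is coisotropic with respect to `ω` if and only if the map
`(ad E) ∘ (ad f)⁻¹ ∘ (ad E)` restricted to `g_{-j-1}` is zero, where `(ad f)⁻¹` is a
chosen right inverse `φ` of `ad f` mapping `g_{-1}` into `g_1`. -/
theorem coisotropic_iff_adE_adfinv_adE_eq_zero
    {F : Type*} [Field F] [IsAlgClosed F] [CharZero F]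
    {g : Type*} [LieRing g] [LieAlgebra F g] [Module.Finite F g]
    [LieAlgebra.IsSemisimple F g]
    (B : LinearMap.BilinForm F g)
    (hB_nondeg : B.Nondegenerate)
    (hB_symm : ∀ a b : g, B a b = B b a)
    (hB_inv : ∀ a b c : g, B ⁅a, b⁆ c = B a ⁅b, c⁆)
    (e h f : g)
    (hhe : ⁅h, e⁆ = 2 • e) (hhf : ⁅h, f⁆ = -(2 • f)) (hef : ⁅e, f⁆ = h)
    (gj : ℤ → Submodule F g)
    (hgj : ∀ n : ℤ, gj n = Module.End.eigenspace ((LieAlgebra.ad F g) h) (n : F))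
    (j : ℤ) (hj : 0 ≤ j) (E : g) (hE : E ∈ gj j)
    -- ω is a symplectic (non-degenerate skew) form on g_1
    (hω_nondeg : ∀ x ∈ gj 1, (∀ y ∈ gj 1, B f ⁅x, y⁆ = 0) → x = 0)
    -- φ : a chosen right inverse of ad f, mapping g_{-1} into g_1
    (φ : g →ₗ[F] g)
    (hφ : ∀ y ∈ gj (-1), φ y ∈ gj 1 ∧ ⁅f, φ y⁆ = y) :
    -- coisotropy of the centralizer of E in g_1 with respect to ω
    (∀ x ∈ gj 1, (∀ z ∈ gj 1, ⁅E, z⁆ = 0 → B f ⁅x, z⁆ = 0) → ⁅E, x⁆ = 0)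
      ↔ (∀ x ∈ gj (-j - 1), ⁅E, φ ⁅E, x⁆⁆ = 0) := by
  have hmem : ∀ (n : ℤ) (x : g), x ∈ gj n ↔ ⁅h, x⁆ = (n : F) • x := fun n x ↦ by
    rw [hgj, Module.End.mem_eigenspace_iff, LieAlgebra.ad_apply]
  have hbr : ∀ {m n : ℤ} {x y : g}, x ∈ gj m → y ∈ gj n → ⁅x, y⁆ ∈ gj (m + n) := by
    intro m n x y hx hy
    rw [hmem] at *
    rw [leibniz_lie, hx, hy, smul_lie, lie_smul, Int.cast_add, add_smul]
  have hskew : ∀ a b c : g, B ⁅a, b⁆ c = -B b ⁅a, c⁆ := fun a b c ↦ by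
    rw [← lie_skew, map_neg, LinearMap.neg_apply, hB_inv]
  have hφE : ∀ y ∈ gj (-j - 1), φ ⁅E, y⁆ ∈ gj 1 ∧ ∀ z, B f ⁅φ ⁅E, y⁆, z⁆ = -B y ⁅E, z⁆ := by
    intro y hy
    have hEy : ⁅E, y⁆ ∈ gj (-1) := by
      convert hbr hE hy using 2
      ring
    refine ⟨(hφ _ hEy).1, fun z ↦ ?_⟩
    rw [← hB_inv, (hφ _ hEy).2, hskew]
  constructor
  · intro hco y hy
    obtain ⟨h1, hω⟩ := hφE y hy
    exact hco _ h1 fun z _ hEz ↦ by rw [hω, hEz, map_zero, neg_zero]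
  · intro hzero x hx horth
    let l : Module.Dual F (gj 1) := B ⁅f, x⁆ ∘ₗ (gj 1).subtype
    let T : gj 1 →ₗ[F] g := LieAlgebra.ad F g E ∘ₗ (gj 1).subtype
    obtain ⟨L, hL⟩ : l ∈ LinearMap.range T.dualMap := by
      rw [LinearMap.range_dualMap_eq_dualAnnihilator_ker, Submodule.mem_dualAnnihilator]
      intro z hz
      change B ⁅f, x⁆ z = 0
      rw [hB_inv]
      exact horth z z.2 hz
    obtain ⟨n, rfl⟩ := Int.eq_ofNat_of_zero_le hj
    obtain ⟨y, hy, hyL⟩ := LinearMap.BilinForm.exists_mem_eigenspace_neg_of_skewAdjoint hB_nondeg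
      (D := LieAlgebra.ad F g h) (hskew h) (c := ((n + 1 : ℕ) : F))
      (fun w w' ↦ Sl2Action.eq_zero_of_jordan
        (X := LieAlgebra.ad F g e) (Y := LieAlgebra.ad F g f)
        (fun v ↦ by
          simp only [LieAlgebra.ad_apply]
          rw [leibniz_lie, hhe, ← Nat.cast_smul_eq_nsmul F, smul_lie, add_comm, Nat.cast_ofNat])
        (fun v ↦ by
          simp only [LieAlgebra.ad_apply]
          rw [leibniz_lie, hhf, ← Nat.cast_smul_eq_nsmul F, neg_lie, smul_lie, Nat.cast_ofNat]
          abel)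
        (fun v ↦ by
          simp only [LieAlgebra.ad_apply]
          rw [leibniz_lie, hef, add_comm])) (-L)
    have hyj : y ∈ gj (-n - 1) := by
      rw [hgj]
      convert hy using 2
      push_cast
      ring
    obtain ⟨h1, hω⟩ := hφE y hyj
    suffices hxy : x - φ ⁅E, y⁆ = 0 by
      rw [sub_eq_zero.mp hxy]
      exact hzero y hyj
    refine hω_nondeg _ (sub_mem hx h1) fun z hz ↦ ?_
    have hEz : ⁅E, z⁆ ∈ (LieAlgebra.ad F g h).eigenspace ((n + 1 : ℕ) : F) := by
      have := hbr hE hz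
      rw [hgj] at this
      convert this using 2
      push_cast
      ring
    have hLz : L ⁅E, z⁆ = B ⁅f, x⁆ z := LinearMap.congr_fun hL ⟨z, hz⟩
    rw [sub_lie, map_sub, hω, hyL _ hEz, LinearMap.neg_apply, hLz, hB_inv]
    ring
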